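/- Let 0 < α < 2, β > 0, and πα/2 < μ < min(π, πα). Then there exists a constant C = C(α, β, μ) > 0 such that for all complex z with μ ≤ arg(z) ≤ π, the two-parameter Mittag-Leffler function satisfies |E_{α,β}(z)| ≤ C/(1 + |z|). -/

import Mathlib

open Real Complex

/-- The two-parameter Mittag-Leffler function `E_{α,β}(z) = ∑ zⁿ/Γ(αn+β)`. -/
noncomputable def mittagLeffler (α β : ℝ) (z : ℂ) : ℂ :=
  ∑' n : ℕ, z ^ n / Complex.Gamma ((α : ℂ) * n + β)

namespace MLaux
open MeasureTheory Set Filter Topology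

lemma integrable_pow_exp (p ε : ℝ) (hp : 0 < p) (hε : 0 < ε) :
    IntegrableOn (fun t : ℝ => t ^ p * Real.exp (-ε * t)) (Ioi 0) := by
  have := integrableOn_rpow_mul_exp_neg_mul_rpow (p := 1) (s := p) (b := ε) (by linarith) one_pos hε
  simpa using this

lemma norm_kernel (p : ℝ) (r : ℂ) {t : ℝ} (ht : 0 < t) :
    ‖((t ^ p : ℝ) : ℂ) * Complex.exp (-r * t)‖ = t ^ p * Real.exp (-r.re * t) := by
  rw [norm_mul, Complex.norm_real, Complex.norm_exp, Real.norm_of_nonneg (Real.rpow_nonneg ht.le _)]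
  simp

lemma meas_kernel (p : ℝ) (r : ℂ) :
    AEStronglyMeasurable (fun t : ℝ => ((t ^ p : ℝ) : ℂ) * Complex.exp (-r * t))
      (volume.restrict (Ioi 0)) := by
  apply Measurable.aestronglyMeasurable
  fun_prop

lemma integrable_kernel (p : ℝ) (hp : 0 < p) (r : ℂ) (hr : 0 < r.re) :
    IntegrableOn (fun t : ℝ => ((t ^ p : ℝ) : ℂ) * Complex.exp (-r * t)) (Ioi 0) := by
  refine (integrable_pow_exp p r.re hp hr).mono' (meas_kernel p r) ?_
  filter_upwards [ae_restrict_mem measurableSet_Ioi] with t ht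
  rw [norm_kernel p r ht]

lemma laplace_diff (p : ℝ) (hp : 0 < p) (r : ℂ) (hr : 0 < r.re) :
    DifferentiableAt ℂ (fun r : ℂ => ∫ t in Ioi (0:ℝ), ((t ^ p : ℝ) : ℂ) * Complex.exp (-r * t)) r := by
  have hs : {w : ℂ | r.re / 2 < w.re} ∈ 𝓝 r :=
    (isOpen_lt continuous_const Complex.continuous_re).mem_nhds (by simp; linarith)
  refine (hasDerivAt_integral_of_dominated_loc_of_deriv_le
    (F' := fun r t => -(((t ^ (p+1) : ℝ) : ℂ) * Complex.exp (-r * t)))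
    (bound := fun t => t ^ (p+1) * Real.exp (-(r.re/2) * t)) hs
    (Eventually.of_forall fun w => meas_kernel p w) (integrable_kernel p hp r hr)
    (meas_kernel (p+1) r).neg ?_ (integrable_pow_exp (p+1) _ (by linarith) (by linarith)) ?_).2.differentiableAt
  · filter_upwards [ae_restrict_mem measurableSet_Ioi] with t ht w hw
    rw [norm_neg, norm_kernel _ _ ht]
    have ht' : 0 < t := ht
    have hw' : r.re / 2 < w.re := hw
    gcongr
  · filter_upwards [ae_restrict_mem measurableSet_Ioi] with t ht w hw
    have ht' : 0 < t := ht
    have h1 : HasDerivAt (fun w : ℂ => -w * (t:ℂ)) (-(t:ℂ)) w := by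
      simpa using ((hasDerivAt_id w).neg.mul_const (t:ℂ))
    have h2 := (h1.cexp).const_mul ((t ^ p : ℝ) : ℂ)
    have e : -(((t ^ (p+1) : ℝ) : ℂ) * Complex.exp (-w * t))
        = ((t ^ p : ℝ) : ℂ) * (Complex.exp (-w * t) * -(t:ℂ)) := by
      rw [Real.rpow_add ht', Real.rpow_one]
      push_cast
      ring
    rw [e]
    exact h2

lemma laplace_eq (a : ℝ) (ha : 1 < a) (r : ℂ) (hr : 0 < r.re) :
    ∫ t in Ioi (0:ℝ), ((t ^ (a-1) : ℝ) : ℂ) * Complex.exp (-r * t)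
      = r ^ (-(a:ℂ)) * Complex.Gamma a := by
  have hU : IsOpen {w : ℂ | 0 < w.re} := isOpen_lt continuous_const Complex.continuous_re
  have hconv : Convex ℝ {w : ℂ | 0 < w.re} := convex_halfSpace_re_gt 0
  have h1 : AnalyticOnNhd ℂ (fun r : ℂ => ∫ t in Ioi (0:ℝ), ((t ^ (a-1) : ℝ) : ℂ) * Complex.exp (-r * t))
      {w : ℂ | 0 < w.re} := by
    apply DifferentiableOn.analyticOnNhd _ hU
    intro w hw
    exact (laplace_diff (a-1) (by linarith) w hw).differentiableWithinAt
  have h2 : AnalyticOnNhd ℂ (fun r : ℂ => r ^ (-(a:ℂ)) * Complex.Gamma a) {w : ℂ | 0 < w.re} := by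
    apply DifferentiableOn.analyticOnNhd _ hU
    intro w hw
    apply DifferentiableAt.differentiableWithinAt
    have : w ∈ Complex.slitPlane := Or.inl hw
    exact ((differentiableAt_id).cpow_const this).mul_const _
  refine h1.eqOn_of_preconnected_of_frequently_eq h2 hconv.isPreconnected (z₀ := 1) (by simp) ?_ hr
  have key : ∀ x : ℝ, 0 < x → ∫ t in Ioi (0:ℝ), ((t ^ (a-1) : ℝ) : ℂ) * Complex.exp (-(x:ℂ) * t)
      = (x:ℂ) ^ (-(a:ℂ)) * Complex.Gamma a := by
    intro x hx
    have := Complex.integral_cpow_mul_exp_neg_mul_Ioi (a := a) (r := x) (by simp; linarith) hx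
    rw [one_div, Complex.inv_cpow _ _ (by rw [Complex.arg_ofReal_of_nonneg hx.le]; exact Real.pi_pos.ne), ← Complex.cpow_neg] at this
    rw [← this]
    refine setIntegral_congr_fun measurableSet_Ioi fun t ht => ?_
    have ht' : 0 < t := ht
    rw [Complex.ofReal_cpow ht'.le]
    push_cast
    ring_nf
  have ht : Tendsto (fun n : ℕ => (((1 + 1 / ((n:ℝ) + 1) : ℝ)) : ℂ)) atTop (𝓝[≠] 1) := by
    apply tendsto_nhdsWithin_of_tendsto_nhds_of_eventually_within
    · have := (tendsto_one_div_add_atTop_nhds_zero_nat (𝕜 := ℝ)).const_add 1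
      have h := (Complex.continuous_ofReal.tendsto _).comp this
      simpa [Function.comp_def] using h
    · refine Eventually.of_forall fun n => ?_
      have : (0:ℝ) < 1 / ((n:ℝ)+1) := by positivity
      simp only [mem_compl_iff, mem_singleton_iff]
      intro h
      rw [← Complex.ofReal_one, Complex.ofReal_inj] at h
      linarith
  refine ht.frequently (Eventually.frequently (Eventually.of_forall fun n => ?_))
  exact key _ (by positivity)

/-- the line `Re s = 1` -/
noncomputable def sl (x : ℝ) : ℂ := 1 + 2 * π * x * I

lemma sl_re (x : ℝ) : (sl x).re = 1 := by simp [sl]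
lemma sl_im (x : ℝ) : (sl x).im = 2 * π * x := by simp [sl]
lemma sl_ne (x : ℝ) : sl x ≠ 0 := by
  intro h; have := sl_re x; rw [h] at this; simp at this
lemma sl_slit (x : ℝ) : sl x ∈ slitPlane := Or.inl (by rw [sl_re]; norm_num)
lemma sl_cont : Continuous sl := by unfold sl; fun_prop
lemma sl_norm_ge (x : ℝ) : 1 ≤ ‖sl x‖ := by
  have := Complex.re_le_norm (sl x); rwa [sl_re] at this
lemma sl_norm_sq (x : ℝ) : 1 + x ^ 2 ≤ ‖sl x‖ ^ 2 := by
  rw [Complex.sq_norm, Complex.normSq_apply, sl_re, sl_im]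
  have : 1 ≤ 2 * π := by linarith [Real.pi_gt_three]
  nlinarith [sq_nonneg x, mul_nonneg (sq_nonneg x) (by nlinarith : 0 ≤ (2*π)^2 - 1)]

lemma sl_rpow (x p : ℝ) (hp : 2 ≤ p) : ‖sl x‖ ^ (-p) ≤ (1 + x^2)⁻¹ := by
  calc ‖sl x‖ ^ (-p) ≤ ‖sl x‖ ^ (-2:ℝ) := Real.rpow_le_rpow_of_exponent_le (sl_norm_ge x) (by linarith)
    _ = (‖sl x‖^2)⁻¹ := by
      rw [Real.rpow_neg (norm_nonneg _)]; norm_cast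
    _ ≤ _ := by
      have := sl_norm_sq x
      gcongr

lemma sl_cpow_norm (x p : ℝ) : ‖sl x ^ (-(p:ℂ))‖ = ‖sl x‖ ^ (-p) := by
  rw [← Complex.ofReal_neg, Complex.norm_cpow_real]

lemma sl_cpow_cont (p : ℝ) : Continuous (fun x => sl x ^ (-(p:ℂ))) :=
  sl_cont.cpow continuous_const (fun x => sl_slit x)

lemma sl_integrable (p : ℝ) (hp : 2 ≤ p) : Integrable (fun x => sl x ^ (-(p:ℂ))) := by
  refine integrable_inv_one_add_sq.mono' (sl_cpow_cont p).aestronglyMeasurable ?_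
  refine Eventually.of_forall fun x => ?_
  rw [sl_cpow_norm]; exact sl_rpow x p hp

open FourierTransform in
lemma inversion (a : ℝ) (ha : 2 ≤ a) (c : ℝ) (hc : 0 < c) :
    ((c ^ (a-1) : ℝ) : ℂ) / Complex.Gamma a
      = ∫ x : ℝ, Complex.exp (c * sl x) * sl x ^ (-(a:ℂ)) := by
  set f : ℝ → ℂ := (Ioi (0:ℝ)).indicator (fun t => ((t ^ (a-1) : ℝ) : ℂ) * Complex.exp (-1 * t)) with hf
  have hfi : Integrable f := by
    rw [hf, integrable_indicator_iff measurableSet_Ioi]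
    exact integrable_kernel (a-1) (by linarith) 1 (by simp)
  have hF : 𝓕 f = fun x => sl x ^ (-(a:ℂ)) * Complex.Gamma a := by
    ext x
    rw [← laplace_eq a (by linarith) (sl x) (by rw [sl_re]; norm_num),
      Real.fourier_real_eq_integral_exp_smul, ← integral_indicator measurableSet_Ioi]
    congr 1
    ext t
    by_cases ht : t ∈ Ioi (0:ℝ)
    · simp only [hf, indicator_of_mem ht, smul_eq_mul]
      rw [mul_left_comm, ← Complex.exp_add]
      congr 2
      simp only [sl]; push_cast; ring
    · simp only [hf, indicator_of_notMem ht, smul_zero]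
  have hFi : Integrable (𝓕 f) := by
    rw [hF]; exact (sl_integrable a ha).mul_const _
  have hcont : ContinuousAt f c := by
    have : ContinuousAt (fun t : ℝ => ((t ^ (a-1) : ℝ) : ℂ) * Complex.exp (-1 * t)) c := by
      have h1 : ContinuousAt (fun t : ℝ => t ^ (a-1)) c := Real.continuousAt_rpow_const _ _ (Or.inl hc.ne')
      have h2 : ContinuousAt (fun t : ℝ => ((t ^ (a-1) : ℝ):ℂ)) c := Complex.continuous_ofReal.continuousAt.comp h1
      exact h2.mul (by fun_prop)
    refine this.congr ?_
    filter_upwards [Ioi_mem_nhds hc] with t ht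
    simp only [hf, indicator_of_mem ht]
  have inv := hfi.fourierInv_fourier_eq hFi hcont
  rw [Real.fourierInv_eq', hF] at inv
  have hfc : f c = ((c ^ (a-1) : ℝ) : ℂ) * Complex.exp (-c) := by
    simp only [hf, indicator_of_mem (show c ∈ Ioi (0:ℝ) from hc)]; simp
  rw [hfc] at inv
  have hG : Complex.Gamma a ≠ 0 := Complex.Gamma_ne_zero_of_re_pos (by simp; linarith)
  rw [div_eq_iff hG]
  have : ((c ^ (a-1) : ℝ) : ℂ) = Complex.exp c * (((c ^ (a-1) : ℝ) : ℂ) * Complex.exp (-c)) := by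
    rw [mul_left_comm, ← Complex.exp_add]; simp
  rw [this, ← inv, ← integral_const_mul, ← integral_mul_const]
  congr 1
  ext x
  rw [smul_eq_mul, ← mul_assoc, ← mul_assoc, ← Complex.exp_add]
  congr 3
  simp only [sl, RCLike.inner_apply, conj_trivial]; push_cast; ring

lemma gamma_bound (a : ℝ) (ha : 2 ≤ a) (c : ℝ) (hc : 0 < c) :
    c ^ (a-1) / ‖Complex.Gamma a‖ ≤ Real.exp c * π := by
  have h := congrArg norm (inversion a ha c hc)
  rw [norm_div, Complex.norm_real, Real.norm_of_nonneg (by positivity)] at h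
  rw [h, ← integral_univ_inv_one_add_sq, ← integral_const_mul]
  refine norm_integral_le_of_norm_le (integrable_inv_one_add_sq.const_mul _) ?_
  refine Eventually.of_forall fun x => ?_
  rw [norm_mul, sl_cpow_norm, Complex.norm_exp]
  have : (c * sl x).re = c := by simp [sl_re]
  rw [this]
  gcongr
  exact sl_rpow x a ha

lemma summ_base (α β : ℝ) (hα : 0 < α) (hβ : 2 ≤ β) (z : ℂ) :
    Summable (fun n : ℕ => z ^ n / Complex.Gamma ((α : ℂ) * n + β)) := by
  set c : ℝ := (2 * (‖z‖ + 1)) ^ (1 / α) with hc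
  have hc0 : 0 < c := by positivity
  have hcα : c ^ α = 2 * (‖z‖ + 1) := by
    rw [hc, ← Real.rpow_mul (by positivity), one_div_mul_cancel hα.ne', Real.rpow_one]
  refine Summable.of_norm_bounded (g := fun n : ℕ => (Real.exp c * π / c ^ (β - 1)) * (1/2 : ℝ)^n)
    (summable_geometric_two.mul_left _) fun n => ?_
  have h1 := gamma_bound (α * n + β) (by have : 0 ≤ α * n := by positivity
                                         linarith) c hc0
  have e : ((α * n + β : ℝ) : ℂ) = (α : ℂ) * n + β := by push_cast; ring
  rw [e] at h1
  have h2 : c ^ (α * n + β - 1) = (2 * (‖z‖ + 1)) ^ n * c ^ (β - 1) := by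
    rw [add_sub_assoc, Real.rpow_add hc0, Real.rpow_mul hc0.le, hcα, Real.rpow_natCast]
  rw [h2] at h1
  rw [norm_div, norm_pow]
  have h3 : ‖z‖ ^ n ≤ (1/2 : ℝ)^n * (2 * (‖z‖ + 1)) ^ n := by
    rw [← mul_pow]
    gcongr
    linarith
  have hp : 0 < c ^ (β - 1) := by positivity
  calc ‖z‖ ^ n / ‖Complex.Gamma ((α : ℂ) * n + β)‖
      ≤ ((1/2 : ℝ)^n * (2 * (‖z‖ + 1)) ^ n) / ‖Complex.Gamma ((α : ℂ) * n + β)‖ := by gcongr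
    _ = (1/2 : ℝ)^n * (1 / c ^ (β - 1)) *
        ((2 * (‖z‖ + 1)) ^ n * c ^ (β - 1) / ‖Complex.Gamma ((α : ℂ) * n + β)‖) := by
        field_simp
    _ ≤ (1/2 : ℝ)^n * (1 / c ^ (β - 1)) * (Real.exp c * π) := by gcongr
    _ = _ := by ring

lemma diff_of_summ (α β : ℝ)
    (hs : ∀ z : ℂ, Summable (fun n : ℕ => z ^ n / Complex.Gamma ((α : ℂ) * n + β))) (w : ℂ) :
    DifferentiableAt ℂ (fun w => mittagLeffler α β (Complex.exp w)) w ∧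
    HasSum (fun n : ℕ => (n:ℂ) * (Complex.exp w ^ n / Complex.Gamma ((α : ℂ) * n + β)))
      (deriv (fun w => mittagLeffler α β (Complex.exp w)) w) := by
  have hU : IsOpen {v : ℂ | v.re < w.re + 1} := isOpen_lt Complex.continuous_re continuous_const
  have hw : w ∈ {v : ℂ | v.re < w.re + 1} := by simp
  have hu := (hs (Complex.exp ((w.re + 1 : ℝ) : ℂ))).norm
  have hd : ∀ n : ℕ, Differentiable ℂ (fun v : ℂ => Complex.exp v ^ n / Complex.Gamma ((α : ℂ) * n + β)) := by
    intro n
    exact (Complex.differentiable_exp.pow n).div_const _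
  have hb : ∀ (n : ℕ), ∀ v ∈ {v : ℂ | v.re < w.re + 1},
      ‖Complex.exp v ^ n / Complex.Gamma ((α : ℂ) * n + β)‖ ≤
      ‖Complex.exp ((w.re + 1 : ℝ) : ℂ) ^ n / Complex.Gamma ((α : ℂ) * n + β)‖ := by
    intro n v hv
    have hv' : v.re < w.re + 1 := hv
    rw [norm_div, norm_div, norm_pow, norm_pow, Complex.norm_exp, Complex.norm_exp, Complex.ofReal_re]
    gcongr
  refine ⟨(Complex.differentiableOn_tsum_of_summable_norm hu (fun n => (hd n).differentiableOn) hU hb).differentiableAt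
    (hU.mem_nhds hw), ?_⟩
  have := Complex.hasSum_deriv_of_summable_norm hu (fun n => (hd n).differentiableOn) hU hb hw
  refine this.congr_fun ?_ |> fun h => h
  intro n
  have h1 := ((Complex.hasDerivAt_exp w).pow n).div_const (Complex.Gamma ((α : ℂ) * n + β))
  have h2 : deriv (fun v : ℂ => Complex.exp v ^ n / Complex.Gamma ((α : ℂ) * n + β)) w = _ := h1.deriv
  rw [h2]
  rcases n with _ | n
  · simp
  · simp [pow_succ]; ring

lemma rec_sum (α β : ℝ) (hα : 0 < α) (hβ : 0 < β)
    (hs : ∀ z : ℂ, Summable (fun n : ℕ => z ^ n / Complex.Gamma ((α : ℂ) * n + (β + 1 : ℝ)))) (w : ℂ) :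
    HasSum (fun n : ℕ => Complex.exp w ^ n / Complex.Gamma ((α : ℂ) * n + β))
      (β * mittagLeffler α (β+1) (Complex.exp w) +
        α * deriv (fun w => mittagLeffler α (β+1) (Complex.exp w)) w) := by
  have h := ((hs (Complex.exp w)).hasSum.mul_left (β:ℂ)).add
    ((diff_of_summ α (β+1) hs w).2.mul_left (α:ℂ))
  refine h.congr_fun ?_ |> fun h => h
  intro n
  have e : (α : ℂ) * n + (β + 1 : ℝ) = ((α : ℂ) * n + β) + 1 := by push_cast; ring
  have hre : 0 < ((α : ℂ) * n + β).re := by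
    have : ((α : ℂ) * n + β) = ((α * n + β : ℝ) : ℂ) := by push_cast; ring
    rw [this, Complex.ofReal_re]; positivity
  have hne : (α : ℂ) * n + β ≠ 0 := by intro h0; rw [h0] at hre; simp at hre
  have hG := Complex.Gamma_ne_zero_of_re_pos hre
  rw [e, Complex.Gamma_add_one _ hne]
  field_simp
  try ring

lemma summ_all (α : ℝ) (hα : 0 < α) (k : ℕ) : ∀ β : ℝ, 0 < β → 2 ≤ β + k → ∀ z : ℂ,
    Summable (fun n : ℕ => z ^ n / Complex.Gamma ((α : ℂ) * n + β)) := by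
  induction k with
  | zero => intro β _ h2 z; exact summ_base α β hα (by simpa using h2) z
  | succ k ih =>
    intro β hβ h2 z
    by_cases hz : z = 0
    · subst hz
      refine summable_of_ne_finset_zero (s := {0}) fun n hn => ?_
      have : n ≠ 0 := by simpa using hn
      simp [this]
    · have := rec_sum α β hα hβ (ih (β+1) (by linarith) (by push_cast at h2; linarith)) (Complex.log z)
      rw [Complex.exp_log hz] at this
      exact this.summable

lemma summ (α β : ℝ) (hα : 0 < α) (hβ : 0 < β) (z : ℂ) :
    Summable (fun n : ℕ => z ^ n / Complex.Gamma ((α : ℂ) * n + β)) :=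
  summ_all α hα 2 β hβ (by push_cast; linarith) z

lemma ml_rec (α β : ℝ) (hα : 0 < α) (hβ : 0 < β) (w : ℂ) :
    mittagLeffler α β (Complex.exp w) = β * mittagLeffler α (β+1) (Complex.exp w) +
        α * deriv (fun w => mittagLeffler α (β+1) (Complex.exp w)) w :=
  (rec_sum α β hα hβ (fun z => summ α (β+1) hα (by linarith) z) w).tsum_eq

lemma ml_diff (α β : ℝ) (hα : 0 < α) (hβ : 0 < β) :
    Differentiable ℂ (fun w => mittagLeffler α β (Complex.exp w)) :=
  fun w => (diff_of_summ α β (fun z => summ α β hα hβ z) w).1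

/-- key angular estimate -/
lemma one_sub_bound (κ : ℝ) (h0 : 0 ≤ κ) (h1 : κ < 1) (u : ℂ) (hu : u.re ≤ κ * ‖u‖) :
    1 + ‖u‖ ≤ 2 / (1 - κ) * ‖1 - u‖ := by
  have hk : 0 < 1 - κ := by linarith
  rw [div_mul_eq_mul_div, le_div_iff₀ hk]
  have hn : ‖1 - u‖ ^ 2 = 1 - 2 * u.re + ‖u‖^2 := by
    rw [Complex.sq_norm, Complex.sq_norm, Complex.normSq_apply, Complex.normSq_apply]
    simp; ring
  refine le_of_sq_le_sq ?_ (by positivity) |> fun h => h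
  have := norm_nonneg u
  rw [mul_pow, mul_pow, hn]
  have h2 : (1 - κ) * (1 + ‖u‖^2) ≤ 1 - 2 * u.re + ‖u‖^2 := by nlinarith [sq_nonneg (1 - ‖u‖)]
  have h3 : (1 + ‖u‖)^2 ≤ 2 * (1 + ‖u‖^2) := by nlinarith [sq_nonneg (1 - ‖u‖)]
  have h4 : 0 ≤ 1 - 2 * u.re + ‖u‖^2 := by rw [← hn]; positivity
  calc (1 + ‖u‖)^2 * (1-κ)^2 ≤ (2 * (1 + ‖u‖^2)) * (1-κ)^2 := by gcongr
    _ = 2 * (1-κ) * ((1 - κ) * (1 + ‖u‖^2)) := by ring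
    _ ≤ 2 * (1-κ) * (1 - 2 * u.re + ‖u‖^2) := by gcongr
    _ ≤ 2 ^ 2 * (1 - 2 * u.re + ‖u‖^2) := by
      gcongr; linarith

noncomputable def uu (α : ℝ) (w : ℂ) (x : ℝ) : ℂ := Complex.exp (w - α * Complex.log (sl x))

lemma uu_eq (α : ℝ) (w : ℂ) (x : ℝ) : uu α w x = Complex.exp w * sl x ^ (-(α:ℂ)) := by
  rw [uu, Complex.cpow_def_of_ne_zero (sl_ne x), ← Complex.exp_add]
  congr 1; ring

lemma uu_norm (α : ℝ) (w : ℂ) (x : ℝ) : ‖uu α w x‖ = Real.exp w.re * ‖sl x‖ ^ (-α) := by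
  rw [uu_eq, norm_mul, sl_cpow_norm, Complex.norm_exp]

lemma uu_cont (α : ℝ) (w : ℂ) : Continuous (uu α w) := by
  have : uu α w = fun x => Complex.exp w * sl x ^ (-(α:ℂ)) := funext (uu_eq α w)
  rw [this]
  exact continuous_const.mul (sl_cpow_cont α)

lemma uu_re (α μ : ℝ) (hα : 0 < α) (hμ1 : π * α / 2 < μ) (hμ2 : μ < π) (w : ℂ)
    (h1 : μ ≤ w.im) (h2 : w.im ≤ 2 * π - μ) (x : ℝ) :
    (uu α w x).re ≤ max 0 (Real.cos (μ - π * α / 2)) * ‖uu α w x‖ := by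
  have harg : |(sl x).arg| ≤ π / 2 := Complex.abs_arg_le_pi_div_two_iff.2 (by rw [sl_re]; norm_num)
  obtain ⟨ha1, ha2⟩ := abs_le.1 harg
  rw [uu, Complex.exp_re, Complex.norm_exp, mul_comm]
  refine mul_le_mul_of_nonneg_right (le_trans ?_ (le_max_right _ _)) (Real.exp_pos _).le
  have him : (w - α * Complex.log (sl x)).im = w.im - α * (sl x).arg := by
    simp [Complex.log_im]
  rw [him]
  set φ := w.im - α * (sl x).arg with hφ
  have l1 : α * (sl x).arg ≤ α * (π/2) := by gcongr
  have l2 : α * (-(π/2)) ≤ α * (sl x).arg := by gcongr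
  have hp := mul_pos Real.pi_pos hα
  rcases le_total φ π with h | h
  · exact Real.cos_le_cos_of_nonneg_of_le_pi (by linarith) h (by linarith)
  · rw [← Real.cos_two_pi_sub φ]
    exact Real.cos_le_cos_of_nonneg_of_le_pi (by linarith) (by linarith) (by linarith)

lemma exists_A (α μ : ℝ) (hα : 0 < α) (hμ1 : π * α / 2 < μ) (hμ2 : μ < π) :
    ∃ A > 0, ∀ w : ℂ, μ ≤ w.im → w.im ≤ 2 * π - μ → ∀ x : ℝ,
      1 + ‖uu α w x‖ ≤ A * ‖1 - uu α w x‖ := by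
  have hp := mul_pos Real.pi_pos hα
  have hk : max 0 (Real.cos (μ - π * α / 2)) < 1 := by
    apply max_lt one_pos
    rw [← Real.cos_zero]
    exact Real.cos_lt_cos_of_nonneg_of_le_pi le_rfl (by linarith) (by linarith)
  refine ⟨2 / (1 - max 0 (Real.cos (μ - π * α / 2))), div_pos two_pos (by linarith), ?_⟩
  intro w h1 h2 x
  exact one_sub_bound _ (le_max_left _ _) hk _ (uu_re α μ hα hμ1 hμ2 w h1 h2 x)

noncomputable def KK (α β : ℝ) (w : ℂ) (x : ℝ) : ℂ :=
  Complex.exp (sl x) * sl x ^ (-(β:ℂ)) * (1 - uu α w x)⁻¹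

lemma pre_norm (β x : ℝ) : ‖Complex.exp (sl x) * sl x ^ (-(β:ℂ))‖ = Real.exp 1 * ‖sl x‖ ^ (-β) := by
  rw [norm_mul, sl_cpow_norm, Complex.norm_exp, sl_re]

lemma pre_cont (β : ℝ) : Continuous (fun x => Complex.exp (sl x) * sl x ^ (-(β:ℂ))) :=
  (Complex.continuous_exp.comp sl_cont).mul (sl_cpow_cont β)

lemma KK_meas (α β : ℝ) (w : ℂ) : AEStronglyMeasurable (KK α β w) := by
  apply Measurable.aestronglyMeasurable
  unfold KK
  exact (pre_cont β).measurable.mul ((continuous_const.sub (uu_cont α w)).measurable.inv)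

lemma series_eq (α β : ℝ) (hα : 0 < α) (hβ : 2 ≤ β) (w : ℂ) (hw : w.re < 0) :
    mittagLeffler α β (Complex.exp w) = ∫ x, KK α β w x := by
  set F : ℕ → ℝ → ℂ := fun n x => Complex.exp w ^ n *
    (Complex.exp ((1:ℝ) * sl x) * sl x ^ (-((α * n + β : ℝ) : ℂ))) with hF
  have ha : ∀ n : ℕ, 2 ≤ α * n + β := fun n => by
    have : 0 ≤ α * n := by positivity
    linarith
  have hFu : ∀ n x, F n x = Complex.exp (sl x) * sl x ^ (-(β:ℂ)) * uu α w x ^ n := by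
    intro n x
    have e : (-((α * n + β : ℝ) : ℂ)) = n * (-(α:ℂ)) + -(β:ℂ) := by push_cast; ring
    simp only [hF]
    rw [e, Complex.cpow_add _ _ (sl_ne x), Complex.cpow_nat_mul, uu_eq, mul_pow]
    simp only [Complex.ofReal_one, one_mul]
    ring
  have hFb : ∀ n x, ‖F n x‖ ≤ Real.exp w.re ^ n * (Real.exp 1 * (1 + x^2)⁻¹) := by
    intro n x
    simp only [hF]
    rw [norm_mul, norm_pow, Complex.norm_exp, Complex.ofReal_one, one_mul, pre_norm]
    gcongr
    exact sl_rpow x _ (ha n)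
  have hFm : ∀ n, AEStronglyMeasurable (F n) := by
    intro n
    have : F n = fun x => Complex.exp (sl x) * sl x ^ (-(β:ℂ)) * uu α w x ^ n := funext (hFu n)
    rw [this]
    exact ((pre_cont β).mul ((uu_cont α w).pow n)).aestronglyMeasurable
  have hbi : ∀ n : ℕ, Integrable (fun x : ℝ => Real.exp w.re ^ n * (Real.exp 1 * (1 + x^2)⁻¹)) :=
    fun n => (integrable_inv_one_add_sq.const_mul _).const_mul _
  have hFi : ∀ n, Integrable (F n) := fun n =>
    (hbi n).mono' (hFm n) (Eventually.of_forall (hFb n))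
  have hq : Real.exp w.re < 1 := by rw [Real.exp_lt_one_iff]; exact hw
  have hsum : Summable fun n => ∫ x, ‖F n x‖ := by
    refine Summable.of_nonneg_of_le (fun n => integral_nonneg fun x => norm_nonneg _)
      (f := fun n : ℕ => Real.exp w.re ^ n * (Real.exp 1 * π)) (fun n => ?_)
      ((summable_geometric_of_lt_one (Real.exp_pos _).le hq).mul_right _)
    calc ∫ x, ‖F n x‖ ≤ ∫ x, Real.exp w.re ^ n * (Real.exp 1 * (1 + x^2)⁻¹) :=
          integral_mono (hFi n).norm (hbi n) (hFb n)
      _ = _ := by rw [integral_const_mul, integral_const_mul, integral_univ_inv_one_add_sq]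
  have h := hasSum_integral_of_summable_integral_norm hFi hsum
  have hint : ∀ n : ℕ, ∫ x, F n x = Complex.exp w ^ n / Complex.Gamma ((α : ℂ) * n + β) := by
    intro n
    simp only [hF]
    rw [integral_const_mul, ← inversion _ (ha n) 1 one_pos, Real.one_rpow]
    push_cast
    ring
  have hts : ∀ x, ∑' n, F n x = KK α β w x := by
    intro x
    have hu : ‖uu α w x‖ < 1 := by
      rw [uu_norm]
      calc Real.exp w.re * ‖sl x‖ ^ (-α) ≤ Real.exp w.re * 1 := by
            gcongr
            exact Real.rpow_le_one_of_one_le_of_nonpos (sl_norm_ge x) (by linarith)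
        _ < 1 := by linarith
    simp only [hFu]
    rw [tsum_mul_left, tsum_geometric_of_norm_lt_one hu, KK]
  simp only [hint, hts] at h
  exact h.tsum_eq

lemma KK_bound (α β A : ℝ) (hα : 0 < α) (hβ : α + 2 ≤ β) (w : ℂ) (x : ℝ)
    (hA : 1 + ‖uu α w x‖ ≤ A * ‖1 - uu α w x‖) (hA0 : 0 < A) :
    ‖KK α β w x‖ ≤ A * Real.exp 1 / (1 + Real.exp w.re) * (1 + x^2)⁻¹ := by
  have hs0 : 0 < ‖sl x‖ := by linarith [sl_norm_ge x]
  have hd : 0 < ‖1 - uu α w x‖ := by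
    by_contra h
    have : ‖1 - uu α w x‖ = 0 := le_antisymm (not_lt.1 h) (norm_nonneg _)
    rw [this] at hA; linarith [norm_nonneg (uu α w x)]
  have h1 : Real.exp w.re = ‖uu α w x‖ * ‖sl x‖ ^ α := by
    rw [uu_norm, mul_assoc, ← Real.rpow_add hs0]; simp
  have h2 : 1 + Real.exp w.re ≤ ‖sl x‖ ^ α * (A * ‖1 - uu α w x‖) := by
    have : 1 ≤ ‖sl x‖ ^ α := Real.one_le_rpow (sl_norm_ge x) hα.le
    calc 1 + Real.exp w.re ≤ ‖sl x‖ ^ α * (1 + ‖uu α w x‖) := by rw [h1]; linarith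
      _ ≤ _ := by gcongr
  have h3 := sl_rpow x (β - α) (by linarith)
  have h4 : ‖sl x‖ ^ (-(β - α)) = ‖sl x‖ ^ (-β) * ‖sl x‖ ^ α := by
    rw [← Real.rpow_add hs0]; congr 1; ring
  rw [KK, norm_mul, pre_norm, norm_inv, div_mul_eq_mul_div, le_div_iff₀ (by positivity)]
  calc Real.exp 1 * ‖sl x‖ ^ (-β) * ‖1 - uu α w x‖⁻¹ * (1 + Real.exp w.re)
      ≤ Real.exp 1 * ‖sl x‖ ^ (-β) * ‖1 - uu α w x‖⁻¹ * (‖sl x‖ ^ α * (A * ‖1 - uu α w x‖)) := by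
        gcongr
    _ = A * Real.exp 1 * ‖sl x‖ ^ (-(β - α)) := by
        rw [h4]; field_simp
    _ ≤ _ := by gcongr

lemma KK_diff (α β μ : ℝ) (hα : 0 < α) (hβ : α + 2 ≤ β) (hμ1 : π * α / 2 < μ) (hμ2 : μ < π)
    (w : ℂ) (h1 : μ < w.im) (h2 : w.im < 2 * π - μ) :
    DifferentiableAt ℂ (fun w => ∫ x, KK α β w x) w := by
  obtain ⟨A, hA0, hA⟩ := exists_A α μ hα hμ1 hμ2
  have hs : {v : ℂ | μ < v.im} ∩ {v : ℂ | v.im < 2 * π - μ} ∈ 𝓝 w :=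
    ((isOpen_lt continuous_const Complex.continuous_im).inter
      (isOpen_lt Complex.continuous_im continuous_const)).mem_nhds ⟨h1, h2⟩
  have hint : Integrable (KK α β w) :=
    (integrable_inv_one_add_sq.const_mul _).mono' (KK_meas α β w)
      (Eventually.of_forall fun x => KK_bound α β A hα hβ w x (hA w h1.le h2.le x) hA0)
  have hne : ∀ v ∈ {v : ℂ | μ < v.im} ∩ {v : ℂ | v.im < 2 * π - μ}, ∀ x, 0 < ‖1 - uu α v x‖ := by
    intro v hv x
    have hh := hA v hv.1.le hv.2.le x
    by_contra h
    have : ‖1 - uu α v x‖ = 0 := le_antisymm (not_lt.1 h) (norm_nonneg _)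
    rw [this] at hh; linarith [norm_nonneg (uu α v x)]
  refine (hasDerivAt_integral_of_dominated_loc_of_deriv_le
    (F' := fun v x => Complex.exp (sl x) * sl x ^ (-(β:ℂ)) * (uu α v x / (1 - uu α v x)^2))
    (bound := fun x => Real.exp 1 * A^2 * (1 + x^2)⁻¹) hs
    (Eventually.of_forall fun w => KK_meas α β w) hint
    ?_ ?_ (integrable_inv_one_add_sq.const_mul _) ?_).2.differentiableAt
  · apply Measurable.aestronglyMeasurable
    exact (pre_cont β).measurable.mul ((uu_cont α w).measurable.div
      ((continuous_const.sub (uu_cont α w)).pow 2).measurable)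
  · refine Eventually.of_forall fun x v hv => ?_
    have hd := hne v hv x
    have hh := hA v hv.1.le hv.2.le x
    rw [norm_mul, pre_norm, norm_div, norm_pow]
    have hb : ‖uu α v x‖ / ‖1 - uu α v x‖ ^ 2 ≤ A ^ 2 := by
      rw [div_le_iff₀ (by positivity), ← mul_pow]
      have h0 := norm_nonneg (uu α v x)
      calc ‖uu α v x‖ ≤ (1 + ‖uu α v x‖)^2 := by nlinarith
        _ ≤ _ := by gcongr
    have h3 := sl_rpow x β (by linarith)
    calc Real.exp 1 * ‖sl x‖ ^ (-β) * (‖uu α v x‖ / ‖1 - uu α v x‖ ^ 2)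
        ≤ Real.exp 1 * (1 + x^2)⁻¹ * A ^ 2 := by gcongr
      _ = _ := by ring
  · refine Eventually.of_forall fun x v hv => ?_
    have hd := hne v hv x
    have hd' : 1 - uu α v x ≠ 0 := norm_pos_iff.1 hd
    have e1 : HasDerivAt (fun v => uu α v x) (uu α v x) v := by
      have := ((hasDerivAt_id v).sub_const ((α:ℂ) * Complex.log (sl x))).cexp
      simpa [uu] using this
    have e2 := ((e1.const_sub 1).fun_inv hd').const_mul (Complex.exp (sl x) * sl x ^ (-(β:ℂ)))
    simpa [KK] using e2

lemma base_eq (α β μ : ℝ) (hα : 0 < α) (hβ : α + 2 ≤ β) (hμ1 : π * α / 2 < μ) (hμ2 : μ < π)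
    (w : ℂ) (h1 : μ < w.im) (h2 : w.im < 2 * π - μ) :
    mittagLeffler α β (Complex.exp w) = ∫ x, KK α β w x := by
  set U := {v : ℂ | μ < v.im} ∩ {v : ℂ | v.im < 2 * π - μ} with hUdef
  have hU : IsOpen U := (isOpen_lt continuous_const Complex.continuous_im).inter
      (isOpen_lt Complex.continuous_im continuous_const)
  have hconv : Convex ℝ U := (convex_halfSpace_im_gt _).inter (convex_halfSpace_im_lt _)
  have a1 : AnalyticOnNhd ℂ (fun w => mittagLeffler α β (Complex.exp w)) U :=
    (ml_diff α β hα (by linarith)).differentiableOn.analyticOnNhd hU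
  have a2 : AnalyticOnNhd ℂ (fun w => ∫ x, KK α β w x) U := by
    apply DifferentiableOn.analyticOnNhd _ hU
    intro v hv
    exact (KK_diff α β μ hα hβ hμ1 hμ2 v hv.1 hv.2).differentiableWithinAt
  have hz : (-1 + π * I : ℂ) ∈ U := by
    constructor
    · simp [hμ2]
    · simp; linarith
  refine a1.eqOn_of_preconnected_of_eventuallyEq a2 hconv.isPreconnected hz ?_ ⟨h1, h2⟩
  filter_upwards [(isOpen_lt Complex.continuous_re continuous_const).mem_nhds
    (show (-1 + π * I : ℂ) ∈ {v : ℂ | v.re < 0} by simp)] with v hv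
  exact series_eq α β hα (by linarith) v hv

lemma base (α β μ : ℝ) (hα : 0 < α) (hβ : α + 2 ≤ β) (hμ1 : π * α / 2 < μ) (hμ2 : μ < π) :
    ∃ C > 0, ∀ w : ℂ, μ < w.im → w.im < 2 * π - μ →
      ‖mittagLeffler α β (Complex.exp w)‖ ≤ C / (1 + Real.exp w.re) := by
  obtain ⟨A, hA0, hA⟩ := exists_A α μ hα hμ1 hμ2
  refine ⟨A * Real.exp 1 * π, by positivity, fun w h1 h2 => ?_⟩
  rw [base_eq α β μ hα hβ hμ1 hμ2 w h1 h2]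
  calc ‖∫ x, KK α β w x‖ ≤ ∫ x : ℝ, A * Real.exp 1 / (1 + Real.exp w.re) * (1 + x^2)⁻¹ :=
        norm_integral_le_of_norm_le (integrable_inv_one_add_sq.const_mul _)
          (Eventually.of_forall fun x => KK_bound α β A hα hβ w x (hA w h1.le h2.le x) hA0)
    _ = _ := by rw [integral_const_mul, integral_univ_inv_one_add_sq]; ring

lemma main (α : ℝ) (hα : 0 < α) (k : ℕ) : ∀ β : ℝ, 0 < β → α + 2 ≤ β + k →
    ∀ μ, π * α / 2 < μ → μ < π →
    ∃ C > 0, ∀ w : ℂ, μ < w.im → w.im < 2 * π - μ →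
      ‖mittagLeffler α β (Complex.exp w)‖ ≤ C / (1 + Real.exp w.re) := by
  induction k with
  | zero => intro β _ h μ h1 h2; exact base α β μ hα (by simpa using h) h1 h2
  | succ k ih =>
    intro β hβ h μ hμ1 hμ2
    set ν := (π * α / 2 + μ) / 2 with hν
    obtain ⟨C, hC0, hC⟩ := ih (β + 1) (by linarith) (by push_cast at h; linarith) ν
      (by linarith) (by linarith)
    set ε := μ - ν with hε
    have hε0 : 0 < ε := by linarith
    refine ⟨β * C + α * (C * Real.exp ε / ε), by positivity, fun w h1 h2 => ?_⟩
    have hw := hC w (by linarith) (by linarith)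
    have hd : ‖deriv (fun w => mittagLeffler α (β+1) (Complex.exp w)) w‖
        ≤ (C * Real.exp ε / (1 + Real.exp w.re)) / ε := by
      refine Complex.norm_deriv_le_of_forall_mem_sphere_norm_le hε0
        (ml_diff α (β+1) hα (by linarith)).diffContOnCl fun v hv => ?_
      have hv' : ‖v - w‖ = ε := by simpa [dist_eq_norm] using hv
      have i1 := abs_le.1 ((Complex.abs_im_le_norm (v - w)).trans_eq hv')
      have i2 := abs_le.1 ((Complex.abs_re_le_norm (v - w)).trans_eq hv')
      rw [Complex.sub_im] at i1
      rw [Complex.sub_re] at i2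
      refine (hC v (by linarith [i1.1]) (by linarith [i1.2])).trans ?_
      rw [div_le_div_iff₀ (by positivity) (by positivity), mul_assoc]
      gcongr
      have e1 : Real.exp w.re ≤ Real.exp ε * Real.exp v.re := by
        rw [← Real.exp_add]; gcongr; linarith [i2.1]
      have e2 : 1 ≤ Real.exp ε := Real.one_le_exp hε0.le
      linarith
    rw [ml_rec α β hα hβ w]
    refine (norm_add_le _ _).trans ?_
    rw [norm_mul, norm_mul, Complex.norm_real, Complex.norm_real, Real.norm_of_nonneg hβ.le,
      Real.norm_of_nonneg hα.le]
    calc _ ≤ β * (C / (1 + Real.exp w.re)) + α * ((C * Real.exp ε / (1 + Real.exp w.re)) / ε) := by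
          gcongr
      _ = _ := by field_simp

end MLaux

/-- Decay estimate for the Mittag-Leffler function in the sector `μ ≤ arg z ≤ π`. -/
theorem mittagLeffler_sector_bound (α β μ : ℝ) (hα0 : 0 < α) (hα2 : α < 2)
    (hβ : 0 < β) (hμ1 : Real.pi * α / 2 < μ) (hμ2 : μ < min Real.pi (Real.pi * α)) :
    ∃ C > 0, ∀ z : ℂ, μ ≤ z.arg → z.arg ≤ Real.pi →
      ‖mittagLeffler α β z‖ ≤ C / (1 + ‖z‖) := by
  have hμπ : μ < Real.pi := lt_of_lt_of_le hμ2 (min_le_left _ _)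
  obtain ⟨k, hk⟩ := exists_nat_ge (α + 2)
  obtain ⟨C, hC0, hC⟩ := MLaux.main α hα0 k β hβ (by linarith) ((Real.pi * α / 2 + μ) / 2)
    (by linarith) (by linarith)
  refine ⟨C, hC0, fun z h1 h2 => ?_⟩
  have hz : z ≠ 0 := by
    rintro rfl
    rw [Complex.arg_zero] at h1
    have := mul_pos Real.pi_pos hα0
    linarith
  have := hC (Complex.log z) (by rw [Complex.log_im]; linarith) (by rw [Complex.log_im]; linarith)
  rwa [Complex.exp_log hz, Complex.log_re, Real.exp_log (norm_pos_iff.2 hz)] at this
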